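/- Lemma 3, Case 3 (edge insertion, other vertices of the affected sub-communities): Let m, α, γ, w, a, b, c be real numbers with m > 0, α > 0, γ > 0, w ≥ 0, a > 0 and 0 ≤ c ≤ 2·α, and assume the pre-update removal gain is nonpositive, i.e. −w/(2·m) + γ·a·b/(4·m²) ≤ 0. If the post-insertion removal gain is positive, i.e. −w/(2·(m + α)) + γ·a·(b + c)/(4·(m + α)²) > 0, then α > (w/(γ·a))·m − b/2. -/

import Mathlib

/-!
Clearing denominators, the gain of removing a vertex from its sub-community is positive exactly
when `w / (γ * a)` times the total edge weight is below half the degree of `U`. An insertion of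
weight `α` raises the total edge weight, hence the left-hand side, while it raises half the degree
of `U` by at most `α`. So a positive gain after the insertion forces `α` to exceed the slack
`w / (γ * a) * m - b / 2` of that inequality before it.
-/

section RemovalGain

variable {K : Type*} [Field K]

/-- The modularity gain `ΔM(v → ∅, γ)` of moving a vertex `v` out of its sub-community, as a
function of the resolution `γ`, the total edge weight `m`, the weight `w = w(v, U)`, the vertex
degree `a = d(v)` and the degree `b = d(U)`. For `m = 0` the divisions make it `0`. -/
def removalGain (γ m w a b : K) : K :=
  -w / (2 * m) + γ * a * b / (4 * m ^ 2)

variable {γ m w a b c α : K}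

theorem removalGain_eq_div [CharZero K] (hm : m ≠ 0) :
    removalGain γ m w a b = (γ * a * b - 2 * (w * m)) / (4 * m ^ 2) := by
  rw [removalGain]
  field_simp
  ring

variable [LinearOrder K] [IsStrictOrderedRing K]

theorem removalGain_pos_iff_mul_lt_mul (hm : m ≠ 0) :
    0 < removalGain γ m w a b ↔ 2 * (w * m) < γ * a * b := by
  rw [removalGain_eq_div hm, div_pos_iff_of_pos_right (by positivity), sub_pos]

theorem removalGain_pos_iff_div_mul_lt (hm : m ≠ 0) (hγa : 0 < γ * a) :
    0 < removalGain γ m w a b ↔ w / (γ * a) * m < b / 2 := by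
  rw [removalGain_pos_iff_mul_lt_mul hm, div_mul_eq_mul_div, div_lt_div_iff₀ hγa two_pos,
    mul_comm 2, mul_comm b]

theorem lemma3_case3_insertion_other_vertices_general
    (hm : m + α ≠ 0) (hα : 0 ≤ α) (hγa : 0 < γ * a) (hw : 0 ≤ w) (hcα : c ≤ 2 * α)
    (hpost : 0 < removalGain γ (m + α) w a (b + c)) :
    w / (γ * a) * m - b / 2 < α := by
  have hratio : 0 ≤ w / (γ * a) := div_nonneg hw hγa.le
  have hlt : w / (γ * a) * m < b / 2 + α :=
    calc w / (γ * a) * m ≤ w / (γ * a) * (m + α) :=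
          mul_le_mul_of_nonneg_left (le_add_of_nonneg_right hα) hratio
      _ < (b + c) / 2 := (removalGain_pos_iff_div_mul_lt hm hγa).1 hpost
      _ ≤ b / 2 + α := by linarith
  exact sub_lt_iff_lt_add'.2 hlt

end RemovalGain

theorem lemma3_case3_insertion_other_vertices
    (m α γ w a b c : ℝ)
    (hm : 0 < m) (hα : 0 < α) (hγ : 0 < γ) (hw : 0 ≤ w)
    (ha : 0 < a) (hc0 : 0 ≤ c) (hcα : c ≤ 2 * α)
    (hpre : -w / (2 * m) + γ * a * b / (4 * m ^ 2) ≤ 0)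
    (hpost : -w / (2 * (m + α)) + γ * a * (b + c) / (4 * (m + α) ^ 2) > 0) :
    α > (w / (γ * a)) * m - b / 2 :=
  lemma3_case3_insertion_other_vertices_general
    (add_pos hm hα).ne' hα.le (mul_pos hγ ha) hw hcα hpost
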